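/- arXiv:math/0012031 — 2 statements merged into one kernel-verified Lean document; each statement's English description precedes it below -/
import Mathlib

section
/- Let A be an associative ring with 1, let M₀ and M₁ be n×n matrices over A, and consider the linear matrix M₀ + X·M₁ with entries in the polynomial ring A[X] (embedding M₀, M₁ entrywise via the constant-coefficient inclusion A → A[X]). Then M₀ + X·M₁ is invertible in the ring of n×n matrices over A[X] if and only if M₀ is invertible over A and the matrix M₀⁻¹·M₁ is nilpotent. -/
open Polynomial in
theorem aux_commX {A : Type*} [Ring A] (n : ℕ) (M : Matrix (Fin n) (Fin n) A[X]) :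
    Commute (Matrix.diagonal (fun _ => (X : A[X]))) M := by
  unfold Commute SemiconjBy
  ext i j : 2
  simp [Matrix.diagonal_mul, Matrix.mul_diagonal, X_mul]

open Polynomial in
theorem aux_smulX {A : Type*} [Ring A] (n : ℕ) (M : Matrix (Fin n) (Fin n) A[X]) :
    (X : A[X]) • M = Matrix.diagonal (fun _ => (X : A[X])) * M := by
  ext i j : 2
  simp [Matrix.diagonal_mul]

open Polynomial in
theorem aux_coeffC {A : Type*} [Ring A] (n : ℕ) (M : Matrix (Fin n) (Fin n) A)
    (G : Matrix (Fin n) (Fin n) A[X]) (k : ℕ) :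
    (M.map C * G).map (fun p => p.coeff k) = M * G.map (fun p => p.coeff k) := by
  ext i j
  simp [Matrix.mul_apply, finset_sum_coeff]

open Polynomial in
theorem aux_coeffC' {A : Type*} [Ring A] (n : ℕ) (M : Matrix (Fin n) (Fin n) A)
    (G : Matrix (Fin n) (Fin n) A[X]) (k : ℕ) :
    (G * M.map C).map (fun p => p.coeff k) = G.map (fun p => p.coeff k) * M := by
  ext i j
  simp [Matrix.mul_apply, finset_sum_coeff]

theorem linear_matrix_isUnit_iff (A : Type*) [Ring A] (n : ℕ)
    (M₀ M₁ : Matrix (Fin n) (Fin n) A) :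
    IsUnit (M₀.map Polynomial.C + (Polynomial.X : Polynomial A) • M₁.map Polynomial.C) ↔
      ∃ u : (Matrix (Fin n) (Fin n) A)ˣ, u.val = M₀ ∧ IsNilpotent ((u⁻¹).val * M₁) := by
  constructor
  · rintro ⟨U, hU⟩
    obtain ⟨G, hG⟩ : ∃ G, G = (U⁻¹).val := ⟨_, rfl⟩
    have h1 : (M₀.map Polynomial.C + (Polynomial.X : Polynomial A) • M₁.map Polynomial.C) * G
        = 1 := by rw [← hU, hG]; simp
    have h2 : G * (M₀.map Polynomial.C + (Polynomial.X : Polynomial A) • M₁.map Polynomial.C)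
        = 1 := by rw [← hU, hG]; simp
    rw [add_mul, Matrix.smul_mul] at h1
    rw [mul_add, aux_smulX, (aux_commX n _).eq, ← mul_assoc, ← (aux_commX n _).eq,
      ← aux_smulX] at h2
    obtain ⟨g, hg⟩ : ∃ g : ℕ → Matrix (Fin n) (Fin n) A,
      ∀ k, g k = G.map (fun p => p.coeff k) := ⟨_, fun _ => rfl⟩
    have e1 : M₀ * g 0 = 1 := by
      rw [hg, ← aux_coeffC]
      ext i j
      have := congrArg (fun p => Polynomial.coeff p 0) (congrFun (congrFun h1 i) j)
      simp only [Matrix.add_apply, Matrix.smul_apply, smul_eq_mul, Polynomial.coeff_add,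
        Polynomial.coeff_X_mul_zero, add_zero] at this
      rw [Matrix.map_apply, this]
      by_cases h : i = j <;> simp [Matrix.one_apply, h]
    have e2 : g 0 * M₀ = 1 := by
      rw [hg, ← aux_coeffC']
      ext i j
      have := congrArg (fun p => Polynomial.coeff p 0) (congrFun (congrFun h2 i) j)
      simp only [Matrix.add_apply, Matrix.smul_apply, smul_eq_mul, Polynomial.coeff_add,
        Polynomial.coeff_X_mul_zero, add_zero] at this
      rw [Matrix.map_apply, this]
      by_cases h : i = j <;> simp [Matrix.one_apply, h]
    have e3 : ∀ k, M₀ * g (k+1) + M₁ * g k = 0 := by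
      intro k
      rw [hg, hg, ← aux_coeffC, ← aux_coeffC]
      ext i j
      have := congrArg (fun p => Polynomial.coeff p (k+1)) (congrFun (congrFun h1 i) j)
      simp only [Matrix.add_apply, Matrix.smul_apply, smul_eq_mul, Polynomial.coeff_add,
        Polynomial.coeff_X_mul] at this
      rw [Matrix.add_apply, Matrix.map_apply, Matrix.map_apply, this]
      by_cases h : i = j <;> simp [Matrix.one_apply, h, Polynomial.coeff_one]
    have e4 : ∀ k, g k = (-(g 0 * M₁)) ^ k * g 0 := by
      intro k
      induction k with
      | zero => simp
      | succ k ih =>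
        have h := congrArg (fun m => g 0 * m) (e3 k)
        simp only [mul_add, ← mul_assoc, e2, one_mul, mul_zero] at h
        rw [pow_succ', mul_assoc, ← ih, neg_mul]
        exact eq_neg_of_add_eq_zero_left h
    refine ⟨⟨M₀, g 0, e1, e2⟩, rfl, ?_⟩
    change IsNilpotent (g 0 * M₁)
    rw [← isNilpotent_neg_iff]
    let K := (Finset.univ.sup fun i => Finset.univ.sup fun j => (G i j).natDegree) + 1
    refine ⟨K, ?_⟩
    have hK : g K = 0 := by
      rw [hg]
      ext i j
      simp only [Matrix.map_apply, Matrix.zero_apply]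
      apply Polynomial.coeff_eq_zero_of_natDegree_lt
      apply Nat.lt_succ_of_le
      exact (Finset.le_sup (f := fun j => (G i j).natDegree) (Finset.mem_univ j)).trans
        (Finset.le_sup (f := fun i => Finset.univ.sup fun j => (G i j).natDegree)
          (Finset.mem_univ i))
    rw [e4] at hK
    calc _ = ((-(g 0 * M₁)) ^ K * g 0) * M₀ := by rw [mul_assoc, e2, mul_one]
      _ = 0 := by rw [hK, zero_mul]
  · rintro ⟨u, rfl, hN⟩
    have hm : ∀ M : Matrix (Fin n) (Fin n) A,
      M.map Polynomial.C = (Polynomial.C : A →+* Polynomial A).mapMatrix M := fun _ => rfl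
    have : u.val.map Polynomial.C + (Polynomial.X : Polynomial A) • M₁.map Polynomial.C =
        u.val.map Polynomial.C * (1 + Matrix.diagonal (fun _ => (Polynomial.X : Polynomial A)) *
          ((u⁻¹).val * M₁).map Polynomial.C) := by
      rw [aux_smulX, mul_add, mul_one, ← mul_assoc, ← (aux_commX n _).eq, mul_assoc]
      simp only [hm]
      rw [← map_mul, ← mul_assoc, Units.mul_inv, one_mul]
    rw [this]
    refine IsUnit.mul ?_ (IsNilpotent.isUnit_one_add ?_)
    · rw [hm]; exact u.isUnit.map _
    · refine Commute.isNilpotent_mul_left (aux_commX n _) ?_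
      rw [hm]; exact hN.map _
end

section
/- Let A be an associative ring with 1 and let M be an invertible n×n matrix over the Laurent polynomial ring A[z,z⁻¹]. Let a, b, a', b' be natural numbers such that the entries of z^a·M and z^{a'}·M⁻¹ lie in A[z], and the entries of z^{-b}·M and z^{-b'}·M⁻¹ lie in A[z⁻¹]. Define P₊ as the quotient of A[z]^n by the right A[z]-submodule { (z^a·M)·v : v ∈ A[z]^n }, and P₋ as the quotient of A[z⁻¹]^n by the right A[z⁻¹]-submodule { (z^{-b}·M)·v : v ∈ A[z⁻¹]^n }. Then: (1) multiplication by z descends to a well-defined right A-linear endomorphism ν₊ of P₊ satisfying (ν₊)^{a+a'} = 0; (2) multiplication by z⁻¹ descends to a well-defined right A-linear endomorphism ν₋ of P₋ satisfying (ν₋)^{b+b'} = 0; (3) P₊ ⊕ P₋ is isomorphic as a right A-module to the free right A-module A^{n(a+b)}, so in particular P₊ and P₋ are finitely generated projective right A-modules. -/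
/-- The embedding of `A[z⁻¹]` (modelled as polynomials in `z⁻¹`) into the Laurent
polynomial ring `A[z,z⁻¹]`, sending the variable to `T (-1) = z⁻¹`. -/
noncomputable def PolynomialInvToLaurent (A : Type*) [Ring A] :
    Polynomial A →+* LaurentPolynomial A :=
  (AddMonoidAlgebra.mapDomainRingHom A (negAddMonoidHom : ℤ →+ ℤ)).comp
    Polynomial.toLaurent

namespace LaurentCok

open LaurentPolynomial

variable {A : Type*} [Ring A]

lemma poly_op_smul (c : Aᵐᵒᵖ) (p : Polynomial A) : c • p = p * Polynomial.C c.unop := by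
  ext; simp [Polynomial.coeff_mul_C]

lemma laurent_op_smul (c : Aᵐᵒᵖ) (p : LaurentPolynomial A) :
    c • p = p * LaurentPolynomial.C c.unop := by
  ext k
  rw [← LaurentPolynomial.single_eq_C, AddMonoidAlgebra.coeff_mul_single_zero]
  rfl

lemma inv_monomial (k : ℕ) (r : A) :
    PolynomialInvToLaurent A (Polynomial.monomial k r) = C r * T (-(k : ℤ)) := by
  simp only [PolynomialInvToLaurent, RingHom.comp_apply, Polynomial.toLaurent_C_mul_T,
    ← LaurentPolynomial.single_eq_C_mul_T]
  simp [-LaurentPolynomial.single_eq_C_mul_T]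

lemma inv_C (r : A) : PolynomialInvToLaurent A (Polynomial.C r) = C r := by
  simpa using inv_monomial 0 r

lemma inv_X_pow (k : ℕ) : PolynomialInvToLaurent A (Polynomial.X ^ k) = T (-(k : ℤ)) := by
  simpa [Polynomial.monomial_one_right_eq_X_pow] using inv_monomial k (1 : A)

lemma coeff_toLaurent_nat (p : Polynomial A) (k : ℕ) :
    (Polynomial.toLaurent p).coeff (k : ℤ) = p.coeff k := by
  induction p using Polynomial.induction_on' with
  | add p q hp hq => simp only [map_add, AddMonoidAlgebra.coeff_add, Finsupp.add_apply, hp, hq,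
      Polynomial.coeff_add]
  | monomial m r =>
    rw [Polynomial.toLaurent_C_mul_T, ← LaurentPolynomial.single_eq_C_mul_T]
    simp [Polynomial.coeff_monomial, Finsupp.single_apply, -LaurentPolynomial.single_eq_C_mul_T]

lemma coeff_toLaurent_neg (p : Polynomial A) (k : ℤ) (hk : k < 0) :
    (Polynomial.toLaurent p).coeff k = 0 := by
  induction p using Polynomial.induction_on' with
  | add p q hp hq => simp only [map_add, AddMonoidAlgebra.coeff_add, Finsupp.add_apply, hp, hq,
      add_zero]
  | monomial m r =>
    rw [Polynomial.toLaurent_C_mul_T, ← LaurentPolynomial.single_eq_C_mul_T]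
    simp [Finsupp.single_apply, -LaurentPolynomial.single_eq_C_mul_T]
    omega

lemma coeff_inv (p : Polynomial A) (k : ℤ) :
    (PolynomialInvToLaurent A p).coeff k = (Polynomial.toLaurent p).coeff (-k) := by
  induction p using Polynomial.induction_on' with
  | add p q hp hq => simp only [map_add, AddMonoidAlgebra.coeff_add, Finsupp.add_apply, hp, hq]
  | monomial m r =>
    rw [Polynomial.toLaurent_C_mul_T, inv_monomial, ← LaurentPolynomial.single_eq_C_mul_T,
      ← LaurentPolynomial.single_eq_C_mul_T]
    simp only [AddMonoidAlgebra.coeff_single, Finsupp.single_apply]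
    congr 1
    apply propext
    omega

lemma inv_injective : Function.Injective (PolynomialInvToLaurent A) := by
  intro p q h
  ext k
  have := congrArg (fun f => f.coeff (-(k : ℤ))) h
  simpa only [coeff_inv, neg_neg, coeff_toLaurent_nat] using this

lemma coeff_T_mul (m k : ℤ) (f : LaurentPolynomial A) : (T m * f).coeff k = f.coeff (k - m) := by
  induction f using LaurentPolynomial.induction_on' with
  | add p q hp hq => simp only [mul_add, AddMonoidAlgebra.coeff_add, Finsupp.add_apply, hp, hq]
  | C_mul_T n r =>
    rw [T_mul, mul_T_assoc, ← LaurentPolynomial.single_eq_C_mul_T,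
      ← LaurentPolynomial.single_eq_C_mul_T]
    simp only [AddMonoidAlgebra.coeff_single, Finsupp.single_apply]
    congr 1
    apply propext
    omega

/-- `(p, q) ↦ z p(z) + q(z⁻¹)` is bijective. -/
lemma tau_bij : Function.Bijective (fun pq : Polynomial A × Polynomial A =>
    T 1 * Polynomial.toLaurent pq.1 + PolynomialInvToLaurent A pq.2) := by
  constructor
  · rintro ⟨p, q⟩ ⟨p', q'⟩ h
    have h' : ∀ k : ℤ, _ := fun k => congrArg (fun f => f.coeff k) h
    simp only [AddMonoidAlgebra.coeff_add, Finsupp.add_apply, coeff_T_mul, coeff_inv] at h'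
    refine Prod.ext ?_ ?_
    · ext k
      have := h' (k + 1)
      rw [coeff_toLaurent_neg q _ (by omega), coeff_toLaurent_neg q' _ (by omega)] at this
      simpa [coeff_toLaurent_nat, -coeff_toLaurent] using this
    · ext k
      have := h' (-k)
      rw [coeff_toLaurent_neg p _ (by omega), coeff_toLaurent_neg p' _ (by omega)] at this
      simpa only [neg_neg, zero_add, coeff_toLaurent_nat] using this
  · intro f
    induction f using LaurentPolynomial.induction_on' with
    | add f g hf hg =>
      obtain ⟨x, rfl⟩ := hf
      obtain ⟨y, rfl⟩ := hg
      refine ⟨x + y, ?_⟩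
      simp only [Prod.fst_add, Prod.snd_add, map_add, mul_add]
      abel
    | C_mul_T m r =>
      rcases le_or_gt m 0 with hm | hm
      · refine ⟨(0, Polynomial.monomial m.natAbs r), ?_⟩
        simp only [map_zero, mul_zero, zero_add, inv_monomial]
        congr 2; omega
      · refine ⟨(Polynomial.monomial (m - 1).toNat r, 0), ?_⟩
        simp only [map_zero, add_zero, Polynomial.toLaurent_C_mul_T]
        rw [T_mul, mul_T_assoc]
        congr 2; omega

variable {n : ℕ}

/-- Left multiplication by a polynomial matrix, as a right `A`-linear map. -/
noncomputable def mv (N : Matrix (Fin n) (Fin n) (Polynomial A)) :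
    (Fin n → Polynomial A) →ₗ[Aᵐᵒᵖ] (Fin n → Polynomial A) where
  toFun v := N.mulVec v
  map_add' := Matrix.mulVec_add N
  map_smul' c v := by
    ext1 i
    simp only [Matrix.mulVec, dotProduct, Pi.smul_apply, poly_op_smul, Finset.sum_mul, mul_assoc,
      RingHom.id_apply]

@[simp] lemma mv_apply (N : Matrix (Fin n) (Fin n) (Polynomial A)) (v) : mv N v = N.mulVec v := rfl

lemma span_eq (N : Matrix (Fin n) (Fin n) (Polynomial A)) :
    Submodule.span Aᵐᵒᵖ {w : Fin n → Polynomial A | ∃ v, w = N.mulVec v} = LinearMap.range (mv N) := by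
  have : {w : Fin n → Polynomial A | ∃ v, w = N.mulVec v} = (LinearMap.range (mv N) : Set _) := by
    ext w; simp [eq_comm]
  rw [this, Submodule.span_eq]

lemma X_smul_eq (k : ℕ) (v : Fin n → Polynomial A) :
    (Polynomial.X ^ k : Polynomial A) • v
      = ((Polynomial.X ^ k : Polynomial A) • (1 : Matrix (Fin n) (Fin n) (Polynomial A))).mulVec v := by
  rw [Matrix.smul_mulVec, Matrix.one_mulVec]

lemma mulVec_X_smul (N : Matrix (Fin n) (Fin n) (Polynomial A)) (v : Fin n → Polynomial A) :
    N.mulVec ((Polynomial.X : Polynomial A) • v) = (Polynomial.X : Polynomial A) • N.mulVec v := by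
  ext1 i
  simp only [Matrix.mulVec, dotProduct, Pi.smul_apply, smul_eq_mul, Finset.mul_sum]
  refine Finset.sum_congr rfl fun j _ => ?_
  rw [← mul_assoc, ← mul_assoc, Polynomial.X_mul]

lemma exists_nu (N N' : Matrix (Fin n) (Fin n) (Polynomial A)) (k : ℕ)
    (h : N * N' = (Polynomial.X ^ k : Polynomial A) • (1 : Matrix (Fin n) (Fin n) (Polynomial A))) :
    ∃ ν : ((Fin n → Polynomial A) ⧸
              Submodule.span Aᵐᵒᵖ {w : Fin n → Polynomial A | ∃ v, w = N.mulVec v}) →ₗ[Aᵐᵒᵖ]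
            ((Fin n → Polynomial A) ⧸
              Submodule.span Aᵐᵒᵖ {w : Fin n → Polynomial A | ∃ v, w = N.mulVec v}),
      (∀ v : Fin n → Polynomial A,
        ν (Submodule.Quotient.mk v) =
          Submodule.Quotient.mk ((Polynomial.X : Polynomial A) • v)) ∧
      ν ^ k = 0 := by
  let m : (Fin n → Polynomial A) →ₗ[Aᵐᵒᵖ] (Fin n → Polynomial A) :=
    mv ((Polynomial.X ^ 1 : Polynomial A) • (1 : Matrix (Fin n) (Fin n) (Polynomial A)))
  have hm : ∀ v, m v = (Polynomial.X : Polynomial A) • v := fun v => by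
    simp only [m, mv_apply]; rw [← X_smul_eq, pow_one]
  have hle : Submodule.span Aᵐᵒᵖ {w : Fin n → Polynomial A | ∃ v, w = N.mulVec v} ≤
      (Submodule.span Aᵐᵒᵖ {w : Fin n → Polynomial A | ∃ v, w = N.mulVec v}).comap m := by
    rw [Submodule.span_le]
    rintro _ ⟨v, rfl⟩
    refine Submodule.subset_span ⟨(Polynomial.X : Polynomial A) • v, ?_⟩
    rw [hm, mulVec_X_smul]
  have hν : ∀ v, Submodule.mapQ _ _ m hle (Submodule.Quotient.mk v) =
      Submodule.Quotient.mk ((Polynomial.X : Polynomial A) • v) := fun v => by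
    rw [Submodule.mapQ_apply, hm]
  refine ⟨Submodule.mapQ _ _ m hle, hν, ?_⟩
  have hpow : ∀ (j : ℕ) v, ((Submodule.mapQ _ _ m hle) ^ j) (Submodule.Quotient.mk v) =
      Submodule.Quotient.mk ((Polynomial.X ^ j : Polynomial A) • v) := by
    intro j
    induction j with
    | zero => intro v; simp
    | succ j ih => intro v; rw [pow_succ, Module.End.mul_apply, hν, ih, smul_smul, ← pow_succ]
  refine LinearMap.ext fun y => ?_
  obtain ⟨x, rfl⟩ := Submodule.Quotient.mk_surjective _ y
  refine (hpow k x).trans ?_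
  rw [X_smul_eq, ← h, ← Matrix.mulVec_mulVec]
  exact (Submodule.Quotient.mk_eq_zero _).2 (Submodule.subset_span ⟨_, rfl⟩)

/-- `(p, q) ↦ z^{1-a} p(z) + z^b q(z⁻¹)`. -/
noncomputable def sig (n a b : ℕ) : ((Fin n → Polynomial A) × (Fin n → Polynomial A)) →ₗ[Aᵐᵒᵖ]
    (Fin n → LaurentPolynomial A) where
  toFun pq i := T (1 - a) * Polynomial.toLaurent (pq.1 i) + T b * PolynomialInvToLaurent A (pq.2 i)
  map_add' x y := by
    ext1 i
    simp only [Prod.fst_add, Prod.snd_add, Pi.add_apply, map_add, mul_add]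
    abel
  map_smul' c x := by
    ext1 i
    simp only [Prod.smul_fst, Prod.smul_snd, Pi.smul_apply, poly_op_smul, map_mul, inv_C,
      Polynomial.toLaurent_C, laurent_op_smul, RingHom.id_apply, add_mul, mul_assoc]

lemma tau_bij_pi : Function.Bijective
    (fun (pq : (Fin n → Polynomial A) × (Fin n → Polynomial A)) (i : Fin n) =>
    T 1 * Polynomial.toLaurent (pq.1 i) + PolynomialInvToLaurent A (pq.2 i)) := by
  constructor
  · rintro ⟨p, q⟩ ⟨p', q'⟩ h
    have h' : ∀ i, (p i, q i) = (p' i, q' i) := fun i => tau_bij.1 (congrFun h i)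
    refine Prod.ext (funext fun i => (Prod.ext_iff.1 (h' i)).1)
      (funext fun i => (Prod.ext_iff.1 (h' i)).2)
  · intro f
    choose x hx using fun i => (tau_bij (A := A)).2 (f i)
    exact ⟨(fun i => (x i).1, fun i => (x i).2), funext hx⟩

lemma ringHom_mulVec {R S : Type*} [Ring R] [Ring S] (φ : R →+* S)
    (N : Matrix (Fin n) (Fin n) R) (v : Fin n → R) (i : Fin n) :
    φ (N.mulVec v i) = (N.map φ).mulVec (fun j => φ (v j)) i := by
  simp [Matrix.mulVec, dotProduct]

lemma comp_bij (a b : ℕ) (M M' : Matrix (Fin n) (Fin n) (LaurentPolynomial A))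
    (hMM' : M * M' = 1) (hM'M : M' * M = 1)
    (Npos Nneg : Matrix (Fin n) (Fin n) (Polynomial A))
    (hNpos : (T (a : ℤ) : LaurentPolynomial A) • M = Npos.map Polynomial.toLaurent)
    (hNneg : (T (-(b : ℤ)) : LaurentPolynomial A) • M = Nneg.map (PolynomialInvToLaurent A)) :
    Function.Bijective (sig n a b ∘ₗ (mv Npos).prodMap (mv Nneg)) := by
  have hMb : Function.Bijective (fun v : Fin n → LaurentPolynomial A => M.mulVec v) := by
    refine Function.bijective_iff_has_inverse.2 ⟨fun v => M'.mulVec v, fun v => ?_, fun v => ?_⟩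
    · simp [Matrix.mulVec_mulVec, hM'M]
    · simp [Matrix.mulVec_mulVec, hMM']
  convert hMb.comp (tau_bij_pi (A := A) (n := n)) using 1
  funext pq
  obtain ⟨p, q⟩ := pq
  funext i
  have e1 : M.mulVec (fun i => T 1 * Polynomial.toLaurent (p i) + PolynomialInvToLaurent A (q i)) i
      = T 1 * M.mulVec (fun i => Polynomial.toLaurent (p i)) i
        + M.mulVec (fun i => PolynomialInvToLaurent A (q i)) i := by
    simp only [Matrix.mulVec, dotProduct, mul_add, Finset.sum_add_distrib, Finset.mul_sum]
    congr 1
    refine Finset.sum_congr rfl fun j _ => ?_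
    rw [← mul_assoc, ← mul_assoc, T_mul]
  refine Eq.trans ?_ e1.symm
  change T (1 - a) * Polynomial.toLaurent (Npos.mulVec p i)
    + T b * PolynomialInvToLaurent A (Nneg.mulVec q i) = _
  rw [ringHom_mulVec, ringHom_mulVec, ← hNpos, ← hNneg, Matrix.smul_mulVec, Matrix.smul_mulVec]
  simp only [Pi.smul_apply, smul_eq_mul, ← mul_assoc, ← T_add]
  simp

lemma isCompl_of_bij {R E F G : Type*} [Ring R] [AddCommGroup E] [Module R E] [AddCommGroup F]
    [Module R F] [AddCommGroup G] [Module R G] (Φ : E →ₗ[R] F) (σ : F →ₗ[R] G)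
    (h : Function.Bijective (σ ∘ₗ Φ)) : IsCompl (LinearMap.range Φ) (LinearMap.ker σ) := by
  constructor
  · rw [Submodule.disjoint_def]
    rintro _ ⟨y, rfl⟩ hy
    have : y = 0 := h.1 (by simpa using hy)
    rw [this, map_zero]
  · rw [codisjoint_iff, eq_top_iff]
    intro x _
    obtain ⟨y, hy⟩ := h.2 (σ x)
    refine Submodule.mem_sup.2 ⟨Φ y, ⟨y, rfl⟩, x - Φ y, ?_, by abel⟩
    rw [LinearMap.mem_ker, map_sub, sub_eq_zero]
    exact hy.symm

/-- coefficients below `a`, `b`. -/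
noncomputable def cf (n a b : ℕ) : ((Fin n → Polynomial A) × (Fin n → Polynomial A)) →ₗ[Aᵐᵒᵖ]
    (Fin n → (Fin a ⊕ Fin b) → A) where
  toFun pq i := Sum.elim (fun k => (pq.1 i).coeff k) (fun k => (pq.2 i).coeff k)
  map_add' x y := by
    funext i k
    rcases k with k | k <;> simp
  map_smul' c x := by
    funext i k
    rcases k with k | k <;> simp

lemma exists_coeff (a : ℕ) (f : Fin a → A) : ∃ p : Polynomial A, ∀ k : Fin a, p.coeff k = f k := by
  refine ⟨∑ k : Fin a, Polynomial.monomial k (f k), fun k => ?_⟩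
  simp [Polynomial.coeff_monomial, Fin.val_inj]

lemma cf_surj (a b : ℕ) : Function.Surjective (cf (A := A) n a b) := by
  intro f
  choose p hp using fun i => exists_coeff a (fun k => f i (Sum.inl k))
  choose q hq using fun i => exists_coeff b (fun k => f i (Sum.inr k))
  refine ⟨(p, q), ?_⟩
  funext i k
  rcases k with k | k
  · exact hp i k
  · exact hq i k

lemma cf_ker (a b : ℕ) : LinearMap.ker (cf (A := A) n a b) = LinearMap.range
    ((mv ((Polynomial.X ^ a : Polynomial A) • (1 : Matrix (Fin n) (Fin n) (Polynomial A)))).prodMap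
      (mv ((Polynomial.X ^ b : Polynomial A) • (1 : Matrix (Fin n) (Fin n) (Polynomial A))))) := by
  ext ⟨p, q⟩
  rw [LinearMap.mem_ker, LinearMap.mem_range]
  constructor
  · intro h
    have h1 : ∀ i, Polynomial.X ^ a ∣ p i := fun i => Polynomial.X_pow_dvd_iff.2 fun d hd =>
      congrFun (congrFun h i) (Sum.inl ⟨d, hd⟩)
    have h2 : ∀ i, Polynomial.X ^ b ∣ q i := fun i => Polynomial.X_pow_dvd_iff.2 fun d hd =>
      congrFun (congrFun h i) (Sum.inr ⟨d, hd⟩)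
    choose r hr using h1
    choose s hs using h2
    refine ⟨(r, s), Prod.ext ?_ ?_⟩
    · change Matrix.mulVec _ r = p
      rw [← X_smul_eq]
      exact funext fun i => (hr i).symm
    · change Matrix.mulVec _ s = q
      rw [← X_smul_eq]
      exact funext fun i => (hs i).symm
  · rintro ⟨⟨r, s⟩, h⟩
    have h1 : Matrix.mulVec _ r = p := congrArg Prod.fst h
    have h2 : Matrix.mulVec _ s = q := congrArg Prod.snd h
    rw [← X_smul_eq] at h1 h2
    subst h1 h2
    funext i k
    rcases k with k | k
    · exact Polynomial.X_pow_dvd_iff.1 (Dvd.intro (r i) rfl) k k.2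
    · exact Polynomial.X_pow_dvd_iff.1 (Dvd.intro (s i) rfl) k k.2

lemma map_X_smul_one (φ : Polynomial A →+* LaurentPolynomial A) (k : ℕ) (m : ℤ)
    (h : φ (Polynomial.X ^ k) = T m) :
    (T m : LaurentPolynomial A) • (1 : Matrix (Fin n) (Fin n) (LaurentPolynomial A)) =
    ((Polynomial.X ^ k : Polynomial A) • (1 : Matrix (Fin n) (Fin n) (Polynomial A))).map φ := by
  ext1 i j
  simp only [Matrix.smul_apply, Matrix.map_apply, smul_eq_mul, map_mul, h]
  rcases eq_or_ne i j with rfl | hij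
  · simp
  · simp [hij]

lemma mul_eq_X_pow (φ : Polynomial A →+* LaurentPolynomial A) (hφ : Function.Injective φ)
    (k : ℕ) (m m' : ℤ) (h : φ (Polynomial.X ^ k) = T (m + m'))
    (M M' : Matrix (Fin n) (Fin n) (LaurentPolynomial A)) (hMM' : M * M' = 1)
    (N N' : Matrix (Fin n) (Fin n) (Polynomial A))
    (hN : (T m : LaurentPolynomial A) • M = N.map φ)
    (hN' : (T m' : LaurentPolynomial A) • M' = N'.map φ) :
    N * N' = (Polynomial.X ^ k : Polynomial A) • (1 : Matrix (Fin n) (Fin n) (Polynomial A)) := by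
  have key : (N * N').map φ =
      ((Polynomial.X ^ k : Polynomial A) • (1 : Matrix (Fin n) (Fin n) (Polynomial A))).map φ := by
    rw [← map_X_smul_one φ k _ h, Matrix.map_mul, ← hN, ← hN', ← hMM', Matrix.smul_mul, T_add,
      ← smul_smul]
    congr 1
    ext1 i j
    simp only [Matrix.mul_apply, Matrix.smul_apply, smul_eq_mul, Finset.mul_sum]
    refine Finset.sum_congr rfl fun l _ => ?_
    rw [← mul_assoc, ← mul_assoc, T_mul]
  exact Matrix.map_injective hφ key

/-- `A ≃ Aᵐᵒᵖ` as right modules. -/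
def opEquiv : A ≃ₗ[Aᵐᵒᵖ] Aᵐᵒᵖ where
  toFun := MulOpposite.op
  invFun := MulOpposite.unop
  map_add' _ _ := rfl
  map_smul' _ _ := rfl
  left_inv _ := rfl
  right_inv _ := rfl

lemma nonempty_equiv (a b : ℕ) (M M' : Matrix (Fin n) (Fin n) (LaurentPolynomial A))
    (hMM' : M * M' = 1) (hM'M : M' * M = 1)
    (Npos Nneg : Matrix (Fin n) (Fin n) (Polynomial A))
    (hNpos : (T (a : ℤ) : LaurentPolynomial A) • M = Npos.map Polynomial.toLaurent)
    (hNneg : (T (-(b : ℤ)) : LaurentPolynomial A) • M = Nneg.map (PolynomialInvToLaurent A)) :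
    Nonempty
      ((((Fin n → Polynomial A) ⧸
          Submodule.span Aᵐᵒᵖ {w : Fin n → Polynomial A | ∃ v, w = Npos.mulVec v}) ×
        ((Fin n → Polynomial A) ⧸
          Submodule.span Aᵐᵒᵖ {w : Fin n → Polynomial A | ∃ v, w = Nneg.mulVec v}))
        ≃ₗ[Aᵐᵒᵖ] (Fin (n * (a + b)) → A)) := by
  have c1 := isCompl_of_bij _ _ (comp_bij a b M M' hMM' hM'M Npos Nneg hNpos hNneg)
  have c2 := isCompl_of_bij _ _ (comp_bij a b (1 : Matrix (Fin n) (Fin n) (LaurentPolynomial A)) 1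
    (by simp) (by simp) _ _
    (map_X_smul_one Polynomial.toLaurent a a (by simp))
    (map_X_smul_one (PolynomialInvToLaurent A) b (-b) (inv_X_pow b)))
  let p1 := Submodule.span Aᵐᵒᵖ {w : Fin n → Polynomial A | ∃ v, w = Npos.mulVec v}
  let p2 := Submodule.span Aᵐᵒᵖ {w : Fin n → Polynomial A | ∃ v, w = Nneg.mulVec v}
  let g := (Submodule.mkQ p1).prodMap (Submodule.mkQ p2)
  have hg : Function.Surjective g :=
    Function.Surjective.prodMap (Submodule.mkQ_surjective _) (Submodule.mkQ_surjective _)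
  have hk : LinearMap.ker g = LinearMap.range ((mv Npos).prodMap (mv Nneg)) := by
    rw [LinearMap.ker_prodMap, LinearMap.range_prodMap, Submodule.ker_mkQ, Submodule.ker_mkQ]
    simp only [p1, p2, span_eq]
  refine ⟨(LinearMap.quotKerEquivOfSurjective g hg).symm ≪≫ₗ Submodule.quotEquivOfEq _ _ hk ≪≫ₗ
    Submodule.quotientEquivOfIsCompl _ _ c1 ≪≫ₗ
    (Submodule.quotientEquivOfIsCompl _ _ c2).symm ≪≫ₗ
    Submodule.quotEquivOfEq _ _ (cf_ker a b).symm ≪≫ₗ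
    LinearMap.quotKerEquivOfSurjective _ (cf_surj a b) ≪≫ₗ
    (LinearEquiv.curry Aᵐᵒᵖ A (Fin n) (Fin a ⊕ Fin b)).symm ≪≫ₗ
    LinearEquiv.funCongrLeft Aᵐᵒᵖ A
      (finProdFinEquiv.symm.trans ((Equiv.refl (Fin n)).prodCongr finSumFinEquiv.symm))⟩

lemma fin_proj {P Q : Type*} [AddCommGroup P] [AddCommGroup Q] [Module Aᵐᵒᵖ P] [Module Aᵐᵒᵖ Q]
    {m : ℕ} (e : (P × Q) ≃ₗ[Aᵐᵒᵖ] (Fin m → A)) :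
    Module.Finite Aᵐᵒᵖ P ∧ Module.Projective Aᵐᵒᵖ P ∧
    Module.Finite Aᵐᵒᵖ Q ∧ Module.Projective Aᵐᵒᵖ Q := by
  let e' : (Fin m → Aᵐᵒᵖ) ≃ₗ[Aᵐᵒᵖ] (P × Q) :=
    (e ≪≫ₗ LinearEquiv.piCongrRight (fun _ => opEquiv)).symm
  have h1 : Module.Finite Aᵐᵒᵖ (P × Q) := Module.Finite.equiv e'
  have h2 : Module.Projective Aᵐᵒᵖ (P × Q) := Module.Projective.of_equiv e'
  exact ⟨Module.Finite.of_surjective (LinearMap.fst Aᵐᵒᵖ P Q) LinearMap.fst_surjective,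
    Module.Projective.of_split (LinearMap.inl Aᵐᵒᵖ P Q) (LinearMap.fst Aᵐᵒᵖ P Q) (by ext; rfl),
    Module.Finite.of_surjective (LinearMap.snd Aᵐᵒᵖ P Q) LinearMap.snd_surjective,
    Module.Projective.of_split (LinearMap.inr Aᵐᵒᵖ P Q) (LinearMap.snd Aᵐᵒᵖ P Q) (by ext; rfl)⟩

end LaurentCok

theorem laurent_cokernels_nilpotent_and_fg_projective (A : Type*) [Ring A]
    (n a b a' b' : ℕ)
    (M M' : Matrix (Fin n) (Fin n) (LaurentPolynomial A))
    (hMM' : M * M' = 1) (hM'M : M' * M = 1)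
    (Npos Npos' Nneg Nneg' : Matrix (Fin n) (Fin n) (Polynomial A))
    (hNpos : (LaurentPolynomial.T (a : ℤ) : LaurentPolynomial A) • M =
      Npos.map Polynomial.toLaurent)
    (hNpos' : (LaurentPolynomial.T (a' : ℤ) : LaurentPolynomial A) • M' =
      Npos'.map Polynomial.toLaurent)
    (hNneg : (LaurentPolynomial.T (-(b : ℤ)) : LaurentPolynomial A) • M =
      Nneg.map (PolynomialInvToLaurent A))
    (hNneg' : (LaurentPolynomial.T (-(b' : ℤ)) : LaurentPolynomial A) • M' =
      Nneg'.map (PolynomialInvToLaurent A)) :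
    -- (1) multiplication by z descends to a nilpotent endomorphism ν₊ of P₊
    (∃ νpos : ((Fin n → Polynomial A) ⧸
              Submodule.span Aᵐᵒᵖ {w : Fin n → Polynomial A | ∃ v, w = Npos.mulVec v}) →ₗ[Aᵐᵒᵖ]
            ((Fin n → Polynomial A) ⧸
              Submodule.span Aᵐᵒᵖ {w : Fin n → Polynomial A | ∃ v, w = Npos.mulVec v}),
      (∀ v : Fin n → Polynomial A,
        νpos (Submodule.Quotient.mk v) =
          Submodule.Quotient.mk ((Polynomial.X : Polynomial A) • v)) ∧
      νpos ^ (a + a') = 0) ∧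
    -- (2) multiplication by z⁻¹ descends to a nilpotent endomorphism ν₋ of P₋
    (∃ νneg : ((Fin n → Polynomial A) ⧸
              Submodule.span Aᵐᵒᵖ {w : Fin n → Polynomial A | ∃ v, w = Nneg.mulVec v}) →ₗ[Aᵐᵒᵖ]
            ((Fin n → Polynomial A) ⧸
              Submodule.span Aᵐᵒᵖ {w : Fin n → Polynomial A | ∃ v, w = Nneg.mulVec v}),
      (∀ v : Fin n → Polynomial A,
        νneg (Submodule.Quotient.mk v) =
          Submodule.Quotient.mk ((Polynomial.X : Polynomial A) • v)) ∧
      νneg ^ (b + b') = 0) ∧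
    -- (3) P₊ ⊕ P₋ is a free right A-module of rank n(a+b)
    Nonempty
      ((((Fin n → Polynomial A) ⧸
          Submodule.span Aᵐᵒᵖ {w : Fin n → Polynomial A | ∃ v, w = Npos.mulVec v}) ×
        ((Fin n → Polynomial A) ⧸
          Submodule.span Aᵐᵒᵖ {w : Fin n → Polynomial A | ∃ v, w = Nneg.mulVec v}))
        ≃ₗ[Aᵐᵒᵖ] (Fin (n * (a + b)) → A)) ∧
    Module.Finite Aᵐᵒᵖ
      ((Fin n → Polynomial A) ⧸
        Submodule.span Aᵐᵒᵖ {w : Fin n → Polynomial A | ∃ v, w = Npos.mulVec v}) ∧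
    Module.Projective Aᵐᵒᵖ
      ((Fin n → Polynomial A) ⧸
        Submodule.span Aᵐᵒᵖ {w : Fin n → Polynomial A | ∃ v, w = Npos.mulVec v}) ∧
    Module.Finite Aᵐᵒᵖ
      ((Fin n → Polynomial A) ⧸
        Submodule.span Aᵐᵒᵖ {w : Fin n → Polynomial A | ∃ v, w = Nneg.mulVec v}) ∧
    Module.Projective Aᵐᵒᵖ
      ((Fin n → Polynomial A) ⧸
        Submodule.span Aᵐᵒᵖ {w : Fin n → Polynomial A | ∃ v, w = Nneg.mulVec v}) := by
  obtain ⟨e⟩ := LaurentCok.nonempty_equiv a b M M' hMM' hM'M Npos Nneg hNpos hNneg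
  refine ⟨LaurentCok.exists_nu Npos Npos' (a + a') ?_,
    LaurentCok.exists_nu Nneg Nneg' (b + b') ?_, ⟨e⟩, LaurentCok.fin_proj e⟩
  · exact LaurentCok.mul_eq_X_pow Polynomial.toLaurent Polynomial.toLaurent_injective _ _ _
      (by rw [Polynomial.toLaurent_X_pow]; push_cast; rfl) M M' hMM' _ _ hNpos hNpos'
  · exact LaurentCok.mul_eq_X_pow (PolynomialInvToLaurent A) LaurentCok.inv_injective _ _ _
      (by rw [LaurentCok.inv_X_pow]; push_cast; rw [neg_add]) M M' hMM' _ _ hNneg hNneg'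
end
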